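/- For all integers q ≥ 1 and s ≥ 1 there is a constant C = C(q, s) > 0 with the following property: for every nonzero polynomial map p : ℝ^q → ℝ^q of degree at most s and every α > 0, the Lebesgue measure of the set {x ∈ [−1/2, 1/2]^q : ‖p(x)‖ ≤ α} is at most C · α^{1/s} / ht(p)^{1/s}. -/

import Mathlib

open MeasureTheory

/-- The (naive) height of a polynomial map `p : ℝ^q → ℝ^q`, given by a family of
multivariate polynomials: the maximum absolute value of the coefficients. -/
noncomputable def polyHeight {q : ℕ} (P : Fin q → MvPolynomial (Fin q) ℝ) : NNReal :=
  Finset.univ.sup fun i => (P i).support.sup fun d => ‖(P i).coeff d‖₊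

lemma multiset_prod_bound (t : ℂ) (δ : ℝ) (hδ : 0 ≤ δ) (m : Multiset ℂ)
    (h : ∀ z ∈ m, δ * ‖z‖ ≤ ‖t - z‖) :
    δ ^ (Multiset.card m) * ‖(m.map (fun z => 0 - z)).prod‖ ≤ ‖(m.map (fun z => t - z)).prod‖ := by
  induction m using Multiset.induction_on with
  | empty => simp
  | cons a m ih =>
    have h1 := ih (fun z hz => h z (Multiset.mem_cons_of_mem hz))
    have h2 := h a (Multiset.mem_cons_self a m)
    simp only [Multiset.map_cons, Multiset.prod_cons, Multiset.card_cons, norm_mul, zero_sub,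
      norm_neg] at h1 ⊢
    calc _ = (δ * ‖a‖) * (δ ^ (Multiset.card m) * ‖(m.map (fun z => -z)).prod‖) := by ring
      _ ≤ _ := by gcongr

lemma one_dim (s : ℕ) (hs : 1 ≤ s) (g : Polynomial ℝ) (hg : g.natDegree ≤ s) (A δ : ℝ)
    (hA : 0 < A) (hδ : 0 < δ) (h0 : A ≤ |g.eval 0|) :
    volume {t : ℝ | (1 / 2 ≤ t ∧ t ≤ 1) ∧ |g.eval t| ≤ A * δ ^ s} ≤ ENNReal.ofReal (8 * s * δ) := by
  have hs' : (1 : ℝ) ≤ s := by exact_mod_cast hs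
  by_cases hd : 1 / 4 ≤ δ
  · calc _ ≤ volume (Set.Icc (1 / 2 : ℝ) 1) := measure_mono (fun t ht => ht.1)
      _ = ENNReal.ofReal (1 - 1 / 2) := Real.volume_Icc
      _ ≤ _ := ENNReal.ofReal_le_ofReal (by nlinarith)
  push Not at hd
  set G := g.map (algebraMap ℝ ℂ) with hG
  have hev : ∀ t : ℝ, ‖G.eval (t : ℂ)‖ = |g.eval t| := by
    intro t
    have : G.eval (t : ℂ) = ((g.eval t : ℝ) : ℂ) := by
      rw [hG]; exact Polynomial.eval_map_algebraMap g (t : ℂ) |>.trans (Polynomial.aeval_algebraMap_apply ℂ t g)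
    rw [this, Complex.norm_real, Real.norm_eq_abs]
  have hGs : G.Splits := IsAlgClosed.splits G
  have hcard : Multiset.card G.roots ≤ s :=
    (Polynomial.card_roots' G).trans (Polynomial.natDegree_map_le.trans hg)
  have hsub : {t : ℝ | (1 / 2 ≤ t ∧ t ≤ 1) ∧ |g.eval t| ≤ A * δ ^ s} ⊆
      ⋃ z ∈ G.roots.toFinset, Metric.closedBall z.re (4 * δ) := by
    rintro t ⟨⟨ht1, ht2⟩, ht⟩
    by_contra hcon
    simp only [Set.mem_iUnion, Metric.mem_closedBall, Multiset.mem_toFinset, not_exists, not_le,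
      Real.dist_eq] at hcon
    have key : ∀ z ∈ G.roots, (2 * δ) * ‖z‖ ≤ ‖(t : ℂ) - z‖ := by
      intro z hz
      by_contra hlt
      push Not at hlt
      have h1 := hcon z hz
      have h2 : |t - z.re| ≤ ‖(t : ℂ) - z‖ := by
        simpa using Complex.abs_re_le_norm ((t : ℂ) - z)
      have h3 : ‖z‖ ≤ ‖(t : ℂ)‖ + ‖(t : ℂ) - z‖ := by
        have := norm_sub_le (t : ℂ) ((t : ℂ) - z)
        simpa using this
      have h4 : ‖(t : ℂ)‖ = t := by
        rw [Complex.norm_real, Real.norm_eq_abs, abs_of_nonneg (by linarith)]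
      nlinarith [norm_nonneg z]
    have h1 := multiset_prod_bound (t : ℂ) (2 * δ) (by positivity) G.roots key
    have h2 : (2 * δ) ^ (Multiset.card G.roots) * ‖G.eval ((0 : ℝ) : ℂ)‖ ≤ ‖G.eval (t : ℂ)‖ := by
      rw [hGs.eval_eq_prod_roots, hGs.eval_eq_prod_roots, norm_mul, norm_mul, Complex.ofReal_zero]
      calc _ = ‖G.leadingCoeff‖ * ((2 * δ) ^ (Multiset.card G.roots) *
            ‖(G.roots.map (fun z => 0 - z)).prod‖) := by ring
        _ ≤ _ := by gcongr
    rw [hev, hev] at h2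
    have h3 : (2 * δ) ^ s ≤ (2 * δ) ^ (Multiset.card G.roots) :=
      pow_le_pow_of_le_one (by positivity) (by linarith) hcard
    have h4 : (2 * δ) ^ s * A ≤ (2 * δ) ^ (Multiset.card G.roots) * |g.eval 0| := by gcongr
    have h5 : δ ^ s < (2 * δ) ^ s := pow_lt_pow_left₀ (by linarith) hδ.le (by omega)
    nlinarith
  calc _ ≤ volume (⋃ z ∈ G.roots.toFinset, Metric.closedBall z.re (4 * δ)) := measure_mono hsub
    _ ≤ ∑ z ∈ G.roots.toFinset, volume (Metric.closedBall z.re (4 * δ)) :=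
      measure_biUnion_finset_le _ _
    _ = (G.roots.toFinset.card : ENNReal) * ENNReal.ofReal (2 * (4 * δ)) := by
      simp [Real.volume_closedBall]
    _ ≤ (s : ENNReal) * ENNReal.ofReal (2 * (4 * δ)) := by
      gcongr
      exact (Multiset.toFinset_card_le _).trans hcard
    _ = ENNReal.ofReal (8 * s * δ) := by
      rw [← ENNReal.ofReal_natCast, ← ENNReal.ofReal_mul (by positivity)]
      congr 1; ring

/-- Some point of the cube has large value. -/
lemma large_value (q s : ℕ) : ∃ K : ℝ, 0 < K ∧ ∀ f : MvPolynomial (Fin q) ℝ, f.totalDegree ≤ s →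
    ∃ x : Fin q → ℝ, (∀ i, |x i| ≤ 1 / 2) ∧ ∀ d, |f.coeff d| ≤ K * |MvPolynomial.eval x f| := by
  classical
  let ex : (Fin q → Fin (s + 1)) → (Fin q →₀ ℕ) := fun e =>
    Finsupp.equivFunOnFinite.symm (fun i => (e i : ℕ))
  have hex : Function.Injective ex := by
    intro a b hab
    have h2 := Finsupp.equivFunOnFinite.symm.injective hab
    funext i
    exact Fin.ext (congrFun h2 i)
  let pt : (Fin q → Fin (s + 1)) → (Fin q → ℝ) := fun e i => ((e i : ℕ) : ℝ) / (2 * (s + 1))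
  let Φ : ((Fin q → Fin (s + 1)) → ℝ) →ₗ[ℝ] MvPolynomial (Fin q) ℝ :=
    ∑ e, (MvPolynomial.monomial (ex e)).comp (LinearMap.proj e)
  have hΦ : ∀ v, Φ v = ∑ e, MvPolynomial.monomial (ex e) (v e) := by
    intro v; simp [Φ]
  have hcoeff : ∀ v e, (Φ v).coeff (ex e) = v e := by
    intro v e
    simp [hΦ, MvPolynomial.coeff_sum, MvPolynomial.coeff_monomial, hex.eq_iff]
  have hdeg : ∀ v i, (Φ v).degreeOf i ≤ s := by
    intro v i
    rw [MvPolynomial.degreeOf_le_iff]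
    intro m hm
    rw [hΦ] at hm
    have := MvPolynomial.support_sum hm
    simp only [Finset.mem_biUnion] at this
    obtain ⟨e, -, he⟩ := this
    have := MvPolynomial.support_monomial_subset he
    rw [Finset.mem_singleton] at this
    subst this
    exact Nat.lt_succ_iff.mp (e i).2
  let L : ((Fin q → Fin (s + 1)) → ℝ) →ₗ[ℝ] ((Fin q → Fin (s + 1)) → ℝ) :=
    LinearMap.pi (fun g => (MvPolynomial.aeval (pt g)).toLinearMap.comp Φ)
  have hL : ∀ v g, L v g = MvPolynomial.eval (pt g) (Φ v) := by
    intro v g; simp [L, MvPolynomial.aeval_eq_eval]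
  have hker : LinearMap.ker L = ⊥ := by
    rw [LinearMap.ker_eq_bot']
    intro v hv
    have hz : Φ v = 0 := by
      have hinj : Function.Injective (fun k : Fin (s + 1) => ((k : ℕ) : ℝ) / (2 * (s + 1))) := by
        intro a b hab
        have h2 : (2 * ((s : ℝ) + 1)) ≠ 0 := by positivity
        have := (div_left_inj' h2).mp hab
        exact Fin.ext (by exact_mod_cast this)
      apply MvPolynomial.eq_zero_of_eval_zero_at_prod_finset (Φ v)
        (fun _ => Finset.univ.image (fun k : Fin (s + 1) => ((k : ℕ) : ℝ) / (2 * (s + 1))))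
      · intro i
        rw [Finset.card_image_of_injective _ hinj]
        simpa using Nat.lt_succ_of_le (hdeg v i)
      · intro x hx
        simp only [Finset.mem_image, Finset.mem_univ, true_and] at hx
        choose e he using hx
        have : x = pt e := by funext i; exact (he i).symm
        rw [this, ← hL, hv]; rfl
    funext e
    rw [← hcoeff v e, hz]; simp
  obtain ⟨K, hK, hLK⟩ := L.exists_antilipschitzWith hker
  refine ⟨K, by exact_mod_cast hK, fun f hf => ?_⟩
  let v : (Fin q → Fin (s + 1)) → ℝ := fun e => f.coeff (ex e)
  have hsupp : ∀ d ∈ f.support, ∃ e, ex e = d := by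
    intro d hd
    have hle : ∀ i, d i < s + 1 := by
      intro i
      have h1 := MvPolynomial.monomial_le_degreeOf i hd
      have h2 := MvPolynomial.degreeOf_le_totalDegree f i
      omega
    refine ⟨fun i => ⟨d i, hle i⟩, ?_⟩
    ext i; rfl
  have hfv : Φ v = f := by
    ext d
    by_cases hd : ∃ e, ex e = d
    · obtain ⟨e, rfl⟩ := hd
      exact hcoeff v e
    · have h1 : f.coeff d = 0 := by
        by_contra h
        exact hd (hsupp d (MvPolynomial.mem_support_iff.mpr h))
      rw [h1, hΦ, MvPolynomial.coeff_sum]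
      apply Finset.sum_eq_zero
      intro e _
      rw [MvPolynomial.coeff_monomial, if_neg (fun h => hd ⟨e, h⟩)]
  obtain ⟨g, -, hg⟩ := Finset.exists_max_image Finset.univ (fun g => |L v g|) Finset.univ_nonempty
  refine ⟨pt g, ?_, ?_⟩
  · intro i
    have : ((g i : ℕ) : ℝ) ≤ s := by exact_mod_cast Nat.lt_succ_iff.mp (g i).2
    rw [abs_of_nonneg (by positivity), div_le_div_iff₀ (by positivity) (by norm_num)]
    linarith
  · intro d
    have hn : ‖v‖ ≤ K * ‖L v‖ := by
      have := hLK.le_mul_dist v 0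
      simpa using this
    have hn2 : ‖L v‖ ≤ |MvPolynomial.eval (pt g) f| := by
      rw [← hfv, ← hL]
      exact (pi_norm_le_iff_of_nonneg (abs_nonneg _)).mpr (fun e => hg e (Finset.mem_univ _))
    by_cases hd : f.coeff d = 0
    · rw [hd, abs_zero]; positivity
    obtain ⟨e, rfl⟩ := hsupp d (MvPolynomial.mem_support_iff.mpr hd)
    calc _ ≤ ‖v‖ := norm_le_pi_norm v e
      _ ≤ K * ‖L v‖ := hn
      _ ≤ _ := by gcongr

lemma cone_bound (q s : ℕ) (hs : 1 ≤ s) (f : MvPolynomial (Fin q) ℝ) (hf : f.totalDegree ≤ s)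
    (x0 : Fin q → ℝ) (hx0 : ∀ i, |x0 i| ≤ 1 / 2) (A δ : ℝ) (hA : 0 < A) (hδ : 0 < δ)
    (h0 : A ≤ |MvPolynomial.eval x0 f|) :
    volume {x : Fin q → ℝ | (∀ i, |x i| ≤ 1 / 2) ∧ |MvPolynomial.eval x f| ≤ A * δ ^ s} ≤
      ENNReal.ofReal (2 * (4 ^ q * (8 * s * δ))) := by
  set E := {x : Fin q → ℝ | (∀ i, |x i| ≤ 1 / 2) ∧ |MvPolynomial.eval x f| ≤ A * δ ^ s} with hE
  let S : Set (ℝ × (Fin q → ℝ)) := {z | (z.1 ∈ Set.Icc (1 / 2 : ℝ) 1) ∧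
    z.2 ∈ Set.Icc (fun _ => (-2 : ℝ)) (fun _ => 2) ∧
    |MvPolynomial.eval (x0 + z.1 • z.2) f| ≤ A * δ ^ s}
  have hcont : Continuous (fun z : ℝ × (Fin q → ℝ) => |MvPolynomial.eval (x0 + z.1 • z.2) f|) := by
    have h1 := MvPolynomial.continuous_eval f
    have h2 : Continuous (fun z : ℝ × (Fin q → ℝ) => x0 + z.1 • z.2) := by fun_prop
    exact (h1.comp h2).abs
  have hSm : MeasurableSet S := by
    refine MeasurableSet.inter (measurable_fst measurableSet_Icc)
      (MeasurableSet.inter (measurable_snd measurableSet_Icc) ?_)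
    exact measurableSet_le hcont.measurable measurable_const
  have hlow : ENNReal.ofReal (1 / 2) * volume E ≤ (volume.prod volume) S := by
    rw [Measure.prod_apply hSm]
    calc ENNReal.ofReal (1 / 2) * volume E = ∫⁻ t in Set.Icc (1 / 2 : ℝ) 1, volume E := by
          rw [setLIntegral_const, Real.volume_Icc, mul_comm]; norm_num
      _ ≤ ∫⁻ t in Set.Icc (1 / 2 : ℝ) 1, volume (Prod.mk t ⁻¹' S) := by
          apply setLIntegral_mono' measurableSet_Icc
          intro t ht
          have ht0 : 0 < t := by linarith [ht.1]
          have hsub : (fun y => t • y) ⁻¹' ((fun y => x0 + y) ⁻¹' E) ⊆ Prod.mk t ⁻¹' S := by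
            intro y hy
            obtain ⟨hy1, hy2⟩ := hy
            have hb : ∀ i, |y i| ≤ 2 := by
              intro i
              have h1 := hy1 i
              have h2 := hx0 i
              simp only [Pi.add_apply, Pi.smul_apply, smul_eq_mul] at h1
              have h3 : |t * y i| ≤ 1 := by
                rw [abs_le] at *; constructor <;> linarith
              rw [abs_mul, abs_of_pos ht0] at h3
              nlinarith [ht.1, abs_nonneg (y i)]
            exact ⟨ht, ⟨fun i => (abs_le.mp (hb i)).1, fun i => (abs_le.mp (hb i)).2⟩, hy2⟩
          refine le_trans ?_ (measure_mono hsub)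
          rw [Measure.addHaar_preimage_smul _ ht0.ne', measure_preimage_add]
          have h1 : (1 : ENNReal) ≤ ENNReal.ofReal |(t ^ Module.finrank ℝ (Fin q → ℝ))⁻¹| := by
            rw [ENNReal.one_le_ofReal, abs_of_pos (by positivity)]
            exact (one_le_inv₀ (by positivity)).mpr (pow_le_one₀ ht0.le ht.2)
          calc volume E = 1 * volume E := (one_mul _).symm
            _ ≤ _ := by gcongr
      _ ≤ _ := setLIntegral_le_lintegral _ _
  have hup : (volume.prod volume) S ≤ ENNReal.ofReal (4 ^ q * (8 * s * δ)) := by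
    rw [Measure.prod_apply_symm hSm]
    calc _ ≤ ∫⁻ y, (Set.Icc (fun _ : Fin q => (-2 : ℝ)) (fun _ => 2)).indicator
            (fun _ => ENNReal.ofReal (8 * s * δ)) y := by
          apply lintegral_mono
          intro y
          by_cases hy : y ∈ Set.Icc (fun _ : Fin q => (-2 : ℝ)) (fun _ => 2)
          · simp only [Set.indicator_of_mem hy]
            let g : Polynomial ℝ := MvPolynomial.aeval
              (fun i => Polynomial.C (y i) * Polynomial.X + Polynomial.C (x0 i)) f
            have hg : g.natDegree ≤ s := by
              have := MvPolynomial.aeval_natDegree_le (σ := Fin q) f hf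
                (fun i => Polynomial.C (y i) * Polynomial.X + Polynomial.C (x0 i)) (n := 1)
                (fun i => Polynomial.natDegree_linear_le)
              simpa using this
            have hge : ∀ t, g.eval t = MvPolynomial.eval (x0 + t • y) f := by
              intro t
              have h1 : g.eval t = Polynomial.evalRingHom t g := rfl
              rw [h1]
              simp only [g]
              rw [MvPolynomial.map_aeval]
              rw [MvPolynomial.eval, MvPolynomial.coe_eval₂Hom, MvPolynomial.coe_eval₂Hom]
              congr 1
              · ext; simp
              · funext i
                simp; ring
            refine le_trans (measure_mono ?_) (one_dim s hs g hg A δ hA hδ ?_)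
            · rintro t ⟨ht1, -, ht3⟩
              exact ⟨ht1, by rw [hge]; exact ht3⟩
            · rw [hge]; simpa using h0
          · have : (fun t : ℝ => (t, y)) ⁻¹' S = ∅ := by
              ext t
              simp only [Set.mem_preimage, Set.mem_empty_iff_false, iff_false]
              exact fun h => hy h.2.1
            simp [this]
      _ = ENNReal.ofReal (8 * s * δ) * ENNReal.ofReal (4 ^ q) := by
          rw [lintegral_indicator measurableSet_Icc, setLIntegral_const, Real.volume_Icc_pi]
          congr 1
          rw [Finset.prod_const, Finset.card_univ, Fintype.card_fin, ← ENNReal.ofReal_pow (by norm_num)]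
          norm_num
      _ = _ := by
          rw [← ENNReal.ofReal_mul (by positivity)]
          congr 1; ring
  calc volume E = ENNReal.ofReal 2 * (ENNReal.ofReal (1 / 2) * volume E) := by
        rw [← mul_assoc, ← ENNReal.ofReal_mul (by norm_num)]; norm_num
    _ ≤ ENNReal.ofReal 2 * ENNReal.ofReal (4 ^ q * (8 * s * δ)) := by
        gcongr; exact hlow.trans hup
    _ = _ := (ENNReal.ofReal_mul (by norm_num)).symm

/-- For all `q, s ≥ 1` there is `C = C(q,s) > 0` such that for every nonzero polynomial
map `p : ℝ^q → ℝ^q` of degree at most `s` and every `α > 0`,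
`meas {x ∈ [-1/2,1/2]^q : ‖p(x)‖ ≤ α} ≤ C α^{1/s} / ht(p)^{1/s}`. -/
theorem small_values_of_polynomials (q s : ℕ) (hq : 1 ≤ q) (hs : 1 ≤ s) :
    ∃ C : ℝ, 0 < C ∧ ∀ P : Fin q → MvPolynomial (Fin q) ℝ,
      (∀ i, (P i).totalDegree ≤ s) → (∃ i, P i ≠ 0) →
      ∀ α : ℝ, 0 < α →
        volume {x : Fin q → ℝ |
            (∀ i, |x i| ≤ 1 / 2) ∧
              Real.sqrt (∑ i, (MvPolynomial.eval x (P i)) ^ 2) ≤ α} ≤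
          ENNReal.ofReal
            (C * α ^ ((1 : ℝ) / (s : ℝ)) / (polyHeight P : ℝ) ^ ((1 : ℝ) / (s : ℝ))) := by
  obtain ⟨K, hK, hKf⟩ := large_value q s
  have hs' : (0 : ℝ) < s := by exact_mod_cast hs
  refine ⟨2 * (4 ^ q * (8 * s * K ^ ((1 : ℝ) / s))), by positivity, ?_⟩
  intro P hP hne α hα
  have hpos : 0 < polyHeight P := by
    obtain ⟨i, hi⟩ := hne
    obtain ⟨d, hd⟩ := MvPolynomial.ne_zero_iff.mp hi
    have h1 : ‖(P i).coeff d‖₊ ≤ (P i).support.sup fun d => ‖(P i).coeff d‖₊ :=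
      Finset.le_sup (f := fun d => ‖(P i).coeff d‖₊) (MvPolynomial.mem_support_iff.mpr hd)
    have h2 : ((P i).support.sup fun d => ‖(P i).coeff d‖₊) ≤ polyHeight P :=
      Finset.le_sup (f := fun i => (P i).support.sup fun d => ‖(P i).coeff d‖₊) (Finset.mem_univ i)
    exact (nnnorm_pos.mpr hd).trans_le (h1.trans h2)
  have hne' : (Finset.univ : Finset (Fin q)).Nonempty := ⟨hne.choose, Finset.mem_univ _⟩
  obtain ⟨i, -, hi⟩ := Finset.exists_mem_eq_sup Finset.univ hne'
    (fun i => (P i).support.sup fun d => ‖(P i).coeff d‖₊)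
  obtain ⟨x0, hx0, hval⟩ := hKf (P i) (hP i)
  have hH : (polyHeight P : ℝ) ≤ K * |MvPolynomial.eval x0 (P i)| := by
    have h0 : 0 ≤ K * |MvPolynomial.eval x0 (P i)| := by positivity
    have : polyHeight P ≤ ⟨K * |MvPolynomial.eval x0 (P i)|, h0⟩ := by
      unfold polyHeight
      rw [hi]
      apply Finset.sup_le
      intro d _
      exact hval d
    exact this
  have hHpos : (0 : ℝ) < polyHeight P := by exact_mod_cast hpos
  set H : ℝ := (polyHeight P : ℝ) with hHdef
  set δ : ℝ := (K * α / H) ^ ((1 : ℝ) / s) with hδ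
  have hδs : H / K * δ ^ s = α := by
    rw [hδ, ← Real.rpow_natCast, ← Real.rpow_mul (by positivity), one_div_mul_cancel hs'.ne',
      Real.rpow_one]
    field_simp
  have key := cone_bound q s hs (P i) (hP i) x0 hx0 (H / K) δ (by positivity) (by positivity)
    (by rw [div_le_iff₀ hK]; linarith)
  refine (measure_mono ?_).trans (key.trans (le_of_eq ?_))
  · rintro x ⟨hx1, hx2⟩
    refine ⟨hx1, ?_⟩
    rw [hδs]
    refine le_trans ?_ hx2
    apply Real.le_sqrt_of_sq_le
    rw [sq_abs]
    exact Finset.single_le_sum (f := fun i => (MvPolynomial.eval x (P i)) ^ 2)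
      (fun j _ => sq_nonneg _) (Finset.mem_univ i)
  · congr 1
    rw [hδ, Real.div_rpow (by positivity) hHpos.le, Real.mul_rpow hK.le hα.le]
    ring
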